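/- Let g be a Lie algebra over a commutative ring R that is free as an R-module. The Chevalley–Eilenberg boundary ∂_k : Λ^k g → Λ^{k−1} g, defined by ∂_k(x_1∧…∧x_k) = Σ_{r<s} (−1)^{r+s} [x_r,x_s] ∧ x_1 ∧ … ∧ x̂_r ∧ … ∧ x̂_s ∧ … ∧ x_k, satisfies ∂_{k−1} ∘ ∂_k = 0. -/

import Mathlib

open ExteriorAlgebra

/-- The wedge `x₁ ∧ … ∧ xₙ`, as an element of the `n`-th exterior power `⋀[R]^n M`. -/
noncomputable def wedge {R M : Type*} [CommRing R] [AddCommGroup M] [Module R M] (n : ℕ)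
    (v : Fin n → M) : ⋀[R]^n M :=
  ⟨ιMulti R n v, ιMulti_range R n (Set.mem_range_self v)⟩

/-!
Every linear endomorphism `f` of `M` extends to a derivation of the exterior algebra `Λ M`, and this
extension is a Lie algebra homomorphism; composed with `ad` it gives the action `θ` of `g` on `Λ g`.
The boundaries assemble into one endomorphism `∂` of `Λ g`, which is determined by Cartan's formula
`∂ (y ∧ w) = -θ_y w - y ∧ ∂ w`. The Jacobi identity makes `∂` commute with every `θ_y`, and then
`∂ (∂ (y ∧ w)) = -∂ (θ_y w) + θ_y (∂ w) + y ∧ ∂ (∂ w) = y ∧ ∂ (∂ w)`,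
so that `∂ ∘ ∂ = 0` by induction on the degree.
-/

namespace ChevalleyEilenberg

theorem removeNth_succ_cons {α : Type*} {n : ℕ} (s : Fin (n + 1)) (a : α) (v : Fin (n + 1) → α) :
    s.succ.removeNth (Fin.cons a v : Fin (n + 2) → α) = Fin.cons a (s.removeNth v) :=
  Fin.cons_comp_succ_succAbove a v s

attribute [local instance 100] LieRing.ofAssociativeRing

section Module

variable {R M N : Type*} [CommRing R] [AddCommGroup M] [Module R M] [AddCommGroup N] [Module R N]

theorem ι_mul_ι_mul_swap (x y : M) (w : ExteriorAlgebra R M) :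
    ι R x * (ι R y * w) = -(ι R y * (ι R x * w)) := by
  rw [← mul_assoc, ← mul_assoc, eq_neg_iff_add_eq_zero, ← add_mul, ι_add_mul_swap, zero_mul]

theorem ι_mul_ι_mul_self (x : M) (w : ExteriorAlgebra R M) : ι R x * (ι R x * w) = 0 := by
  rw [← mul_assoc, ι_sq_zero, zero_mul]

theorem ιMulti_cons {n : ℕ} (a : M) (v : Fin n → M) :
    ιMulti R (n + 1) (Fin.cons a v : Fin (n + 1) → M) = ι R a * ιMulti R n v :=
  ιMulti_succ_apply _

theorem linearMap_ext_of_ι_mul {F G : ExteriorAlgebra R M →ₗ[R] N} (one : F 1 = G 1)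
    (ι_mul : ∀ m w, F w = G w → F (ι R m * w) = G (ι R m * w)) : F = G := by
  refine LinearMap.ext fun w => ?_
  induction w using CliffordAlgebra.left_induction with
  | algebraMap r => rw [Algebra.algebraMap_eq_smul_one, map_smul, map_smul, one]
  | add v w hv hw => rw [map_add, map_add, hv, hw]
  | ι_mul w m hw => exact ι_mul m w hw

/-- The linear endomorphism `T` of the exterior algebra with `T 1 = 0` and
`T (m ∧ w) = A m w + c • (m ∧ T w)`. Both derivations (`c = 1`) and the Chevalley–Eilenberg
boundary (`c = -1`) arise in this way; `hA` says that the recursion is compatible with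
`m ∧ m = 0`. -/
noncomputable def leftRec (A : M →ₗ[R] Module.End R (ExteriorAlgebra R M)) (c : R)
    (hA : ∀ m w, A m (ι R m * w) + c • (ι R m * A m w) = 0) :
    Module.End R (ExteriorAlgebra R M) :=
  CliffordAlgebra.foldr' (0 : QuadraticForm R M)
    ((LinearMap.coprodEquiv R).toLinearMap ∘ₗ
      A.prod (c • LinearMap.mul R (ExteriorAlgebra R M) ∘ₗ ι R))
    (fun m w T => by
      change A m (ι R m * w) + c • (ι R m * (A m w + c • (ι R m * T))) = (0 : R) • T
      rw [mul_add, smul_add, ← add_assoc, hA, mul_smul_comm, ι_mul_ι_mul_self]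
      simp only [smul_zero, add_zero, zero_smul])
    0

section leftRec

variable (A : M →ₗ[R] Module.End R (ExteriorAlgebra R M)) (c : R)
  (hA : ∀ m w, A m (ι R m * w) + c • (ι R m * A m w) = 0)

theorem leftRec_one : leftRec A c hA 1 = 0 := by
  rw [← map_one (algebraMap R (ExteriorAlgebra R M))]
  exact (CliffordAlgebra.foldr'_algebraMap _ _ _ 0 1).trans (smul_zero 1)

theorem leftRec_ι_mul (m : M) (w : ExteriorAlgebra R M) :
    leftRec A c hA (ι R m * w) = A m w + c • (ι R m * leftRec A c hA w) :=
  CliffordAlgebra.foldr'_ι_mul _ _ _ 0 m w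

end leftRec

/-- The derivation of the exterior algebra that extends a linear endomorphism `f` of `M`. -/
noncomputable def derivationExtension (f : Module.End R M) : Module.End R (ExteriorAlgebra R M) :=
  leftRec (LinearMap.mul R (ExteriorAlgebra R M) ∘ₗ ι R ∘ₗ f) 1 fun m w => by
    simp [ι_mul_ι_mul_swap (f m) m]

theorem derivationExtension_one (f : Module.End R M) : derivationExtension f 1 = 0 :=
  leftRec_one _ _ _

theorem derivationExtension_ι_mul (f : Module.End R M) (y : M) (w : ExteriorAlgebra R M) :
    derivationExtension f (ι R y * w) = ι R (f y) * w + ι R y * derivationExtension f w := by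
  simp [derivationExtension, leftRec_ι_mul]

theorem derivationExtension_ιMulti (f : Module.End R M) {n : ℕ} (v : Fin (n + 1) → M) :
    derivationExtension f (ιMulti R (n + 1) v) =
      ∑ s : Fin (n + 1), (-1 : ℤ) ^ (s : ℕ) • (ι R (f (v s)) * ιMulti R n (s.removeNth v)) := by
  induction n with
  | zero =>
    rw [ιMulti_succ_apply, derivationExtension_ι_mul]
    simp [derivationExtension_one]
  | succ n ih =>
    cases v using Fin.consCases with | _ a v =>
    rw [ιMulti_cons, derivationExtension_ι_mul, ih, Fin.sum_univ_succ (n := n + 1), Finset.mul_sum]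
    congr 1
    · simp
    · refine Finset.sum_congr rfl fun s _ => ?_
      rw [removeNth_succ_cons, ιMulti_cons, Fin.cons_succ, ι_mul_ι_mul_swap _ a, mul_smul_comm,
        Fin.val_succ, pow_succ, mul_neg_one, neg_smul, smul_neg, neg_neg]

/-- `derivationExtension` as a homomorphism of Lie algebras, from the endomorphisms of `M` to those
of its exterior algebra. -/
noncomputable def derivationExtensionHom :
    Module.End R M →ₗ⁅R⁆ Module.End R (ExteriorAlgebra R M) where
  toFun := derivationExtension
  map_add' f g := linearMap_ext_of_ι_mul (by simp [derivationExtension_one]) fun m w h => by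
    simp only [derivationExtension_ι_mul, LinearMap.add_apply, map_add, add_mul] at h ⊢
    rw [h, mul_add]
    abel
  map_smul' c f := linearMap_ext_of_ι_mul (by simp [derivationExtension_one]) fun m w h => by
    simp only [LinearMap.smul_apply, RingHom.id_apply] at h ⊢
    simp only [derivationExtension_ι_mul, h, LinearMap.smul_apply, map_smul, smul_add,
      smul_mul_assoc, mul_smul_comm]
  map_lie' {f g} := linearMap_ext_of_ι_mul (by simp [Ring.lie_def, derivationExtension_one])
    fun m w h => by
      simp only [Ring.lie_def, Module.End.mul_apply, LinearMap.sub_apply] at h ⊢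
      simp only [derivationExtension_ι_mul, h, LinearMap.sub_apply, Module.End.mul_apply, map_add,
        map_sub, sub_mul, mul_sub]
      abel

theorem coe_apply_eq_of_coe_wedge_eq {m n : ℕ} {d : ⋀[R]^m M →ₗ[R] ⋀[R]^n M}
    {D : Module.End R (ExteriorAlgebra R M)}
    (h : ∀ x, (d (wedge m x) : ExteriorAlgebra R M) = D (wedge m x : ⋀[R]^m M)) (w : ⋀[R]^m M) :
    (d w : ExteriorAlgebra R M) = D w := by
  have subtype_comp : (⋀[R]^n M).subtype ∘ₗ d = D ∘ₗ (⋀[R]^m M).subtype :=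
    exteriorPower.linearMap_ext (AlternatingMap.ext h)
  exact LinearMap.congr_fun subtype_comp w

end Module

section Lie

variable {R L : Type*} [CommRing R] [LieRing L] [LieAlgebra R L]

variable (R L) in
/-- The action `θ` of a Lie algebra `L` on its exterior algebra by derivations extending the adjoint
action. -/
noncomputable def adExterior : L →ₗ⁅R⁆ Module.End R (ExteriorAlgebra R L) :=
  derivationExtensionHom.comp (LieAlgebra.ad R L)

theorem adExterior_one (x : L) : adExterior R L x 1 = 0 :=
  derivationExtension_one _

theorem adExterior_ι_mul (x y : L) (w : ExteriorAlgebra R L) :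
    adExterior R L x (ι R y * w) = ι R ⁅x, y⁆ * w + ι R y * adExterior R L x w :=
  derivationExtension_ι_mul _ y w

theorem adExterior_ιMulti (x : L) {n : ℕ} (v : Fin (n + 1) → L) :
    adExterior R L x (ιMulti R (n + 1) v) =
      ∑ s : Fin (n + 1), (-1 : ℤ) ^ (s : ℕ) • (ι R ⁅x, v s⁆ * ιMulti R n (s.removeNth v)) :=
  derivationExtension_ιMulti _ v

theorem adExterior_lie (x y : L) (w : ExteriorAlgebra R L) :
    adExterior R L ⁅x, y⁆ w =
      adExterior R L x (adExterior R L y w) - adExterior R L y (adExterior R L x w) :=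
  LinearMap.congr_fun (LieHom.map_lie (adExterior R L) x y) w

variable (R L) in
/-- The Chevalley–Eilenberg boundary `∂` in all degrees at once, defined through Cartan's formula
`∂ (y ∧ w) = -θ_y w - y ∧ ∂ w`. -/
noncomputable def boundary : Module.End R (ExteriorAlgebra R L) :=
  leftRec (-(adExterior R L : L →ₗ[R] Module.End R (ExteriorAlgebra R L))) (-1) fun m w => by
    simp [adExterior_ι_mul]

theorem boundary_one : boundary R L 1 = 0 :=
  leftRec_one _ _ _

theorem boundary_ι_mul (y : L) (w : ExteriorAlgebra R L) :
    boundary R L (ι R y * w) = -adExterior R L y w - ι R y * boundary R L w := by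
  simp [boundary, leftRec_ι_mul, sub_eq_add_neg]

theorem boundary_comp_adExterior (x : L) :
    boundary R L ∘ₗ adExterior R L x = adExterior R L x ∘ₗ boundary R L :=
  linearMap_ext_of_ι_mul (by simp [adExterior_one, boundary_one]) fun m w h => by
    simp only [LinearMap.comp_apply] at h ⊢
    simp only [adExterior_ι_mul, boundary_ι_mul, h, map_add, map_sub, map_neg, adExterior_lie]
    abel

theorem boundary_comp_boundary : boundary R L ∘ₗ boundary R L = 0 :=
  linearMap_ext_of_ι_mul (by simp [boundary_one]) fun m w h => by
    have commute : boundary R L (adExterior R L m w) = adExterior R L m (boundary R L w) :=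
      LinearMap.congr_fun (boundary_comp_adExterior m) w
    simp only [LinearMap.comp_apply, LinearMap.zero_apply] at h ⊢
    simp only [boundary_ι_mul, map_sub, map_neg, h, commute, mul_zero]
    abel

variable (R) in
/-- The summand `(-1)^(r+s) [x_r, x_s] ∧ x_0 ∧ … ∧ x̂_r ∧ … ∧ x̂_s ∧ … ∧ x_{k+1}` of the boundary of
a wedge, extended by zero to the pairs with `s ≤ r`. Numbering from `0` instead of `1` does not
change the sign, and `r`, being smaller than `s`, keeps its position once `x_s` is removed. -/
noncomputable def boundarySummand {k : ℕ} (x : Fin (k + 2) → L) (r s : Fin (k + 2)) :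
    ⋀[R]^(k + 1) L :=
  if h : r < s then
    (-1 : ℤ) ^ ((r : ℕ) + (s : ℕ)) •
      wedge (k + 1) (Fin.cons ⁅x r, x s⁆
        ((r.castPred (Fin.ne_last_of_lt h)).removeNth (s.removeNth x)))
  else 0

theorem boundarySummand_of_le {k : ℕ} (x : Fin (k + 2) → L) {r s : Fin (k + 2)} (h : s ≤ r) :
    boundarySummand R x r s = 0 :=
  dif_neg h.not_gt

theorem coe_boundarySummand_of_lt {k : ℕ} (x : Fin (k + 2) → L) {r s : Fin (k + 2)} (h : r < s) :
    (boundarySummand R x r s : ExteriorAlgebra R L) =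
      (-1 : ℤ) ^ ((r : ℕ) + (s : ℕ)) • (ι R ⁅x r, x s⁆ *
        ιMulti R k ((r.castPred (Fin.ne_last_of_lt h)).removeNth (s.removeNth x))) := by
  rw [boundarySummand, dif_pos h, ← ιMulti_cons]
  rfl

theorem coe_boundarySummand_cons_zero_succ {k : ℕ} (a : L) (v : Fin (k + 1) → L)
    (s : Fin (k + 1)) :
    (boundarySummand R (Fin.cons a v : Fin (k + 2) → L) 0 s.succ : ExteriorAlgebra R L) =
      -((-1 : ℤ) ^ (s : ℕ) • (ι R ⁅a, v s⁆ * ιMulti R k (s.removeNth v))) := by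
  rw [coe_boundarySummand_of_lt _ (Fin.succ_pos s), removeNth_succ_cons, Fin.castPred_zero,
    Fin.removeNth_zero, Fin.tail_cons]
  simp [pow_succ]

theorem coe_boundarySummand_cons_succ_succ {k : ℕ} (a : L) (v : Fin (k + 2) → L)
    (r s : Fin (k + 2)) :
    (boundarySummand R (Fin.cons a v : Fin (k + 3) → L) r.succ s.succ : ExteriorAlgebra R L) =
      -(ι R a * (boundarySummand R v r s : ⋀[R]^(k + 1) L)) := by
  by_cases h : r < s
  · have sign : (-1 : ℤ) ^ ((r.succ : ℕ) + (s.succ : ℕ)) = (-1) ^ ((r : ℕ) + (s : ℕ)) := by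
      simp only [Fin.val_succ]
      ring
    rw [coe_boundarySummand_of_lt _ (Fin.succ_lt_succ_iff.2 h), coe_boundarySummand_of_lt _ h,
      sign, removeNth_succ_cons, ← Fin.succ_castPred_eq_castPred_succ, removeNth_succ_cons,
      ιMulti_cons, Fin.cons_succ, Fin.cons_succ, ι_mul_ι_mul_swap _ a, mul_smul_comm, smul_neg]
  · rw [boundarySummand_of_le _ (Fin.succ_le_succ_iff.2 (not_lt.1 h)),
      boundarySummand_of_le _ (not_lt.1 h), ZeroMemClass.coe_zero, ZeroMemClass.coe_zero, mul_zero,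
      neg_zero]

theorem boundary_ιMulti_one (x : Fin 1 → L) : boundary R L (ιMulti R 1 x) = 0 := by
  rw [ιMulti_succ_apply, ιMulti_zero_apply, boundary_ι_mul, adExterior_one, boundary_one, neg_zero,
    mul_zero, sub_zero]

theorem boundary_ιMulti {k : ℕ} (x : Fin (k + 2) → L) :
    boundary R L (ιMulti R (k + 2) x) =
      (∑ r : Fin (k + 2), ∑ s : Fin (k + 2), boundarySummand R x r s : ⋀[R]^(k + 1) L) := by
  cases x using Fin.consCases with | _ a v =>
  have boundary_tail : -(ι R a * boundary R L (ιMulti R (k + 1) v)) =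
      ∑ r : Fin (k + 1), ∑ s : Fin (k + 1),
        (boundarySummand R (Fin.cons a v : Fin (k + 2) → L) r.succ s.succ : ⋀[R]^(k + 1) L) := by
    cases k with
    | zero =>
      rw [boundary_ιMulti_one, mul_zero, neg_zero, Fin.sum_univ_one, Fin.sum_univ_one,
        boundarySummand_of_le _ le_rfl, ZeroMemClass.coe_zero]
    | succ k =>
      simp only [boundary_ιMulti v, coe_boundarySummand_cons_succ_succ, Submodule.coe_sum,
        Finset.mul_sum, Finset.sum_neg_distrib]
  rw [ιMulti_cons, boundary_ι_mul, sub_eq_add_neg, boundary_tail, adExterior_ιMulti,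
    Fin.sum_univ_succ (n := k + 1)]
  simp only [Fin.sum_univ_succ (n := k + 1), boundarySummand_of_le _ (Fin.zero_le _), zero_add,
    Submodule.coe_add, Submodule.coe_sum, coe_boundarySummand_cons_zero_succ,
    Finset.sum_neg_distrib]

end Lie

end ChevalleyEilenberg

open ChevalleyEilenberg in
theorem stmt_7_general (R : Type*) [CommRing R] (L : Type*) [LieRing L] [LieAlgebra R L]
    (d : ∀ k : ℕ, (⋀[R]^(k + 1) L) →ₗ[R] ⋀[R]^k L)
    (hd : ∀ (k : ℕ) (x : Fin (k + 2) → L),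
      d (k + 1) (wedge (k + 2) x) =
        ∑ r : Fin (k + 2), ∑ s : Fin (k + 2), boundarySummand R x r s)
    (hd0 : ∀ x : Fin 1 → L, d 0 (wedge 1 x) = 0) :
    ∀ k : ℕ, (d k).comp (d (k + 1)) = 0 := by
  have coe_d (k : ℕ) (w : ⋀[R]^(k + 1) L) :
      (d k w : ExteriorAlgebra R L) = boundary R L w := by
    refine coe_apply_eq_of_coe_wedge_eq (fun x => ?_) w
    cases k with
    | zero => rw [hd0]; exact (boundary_ιMulti_one x).symm
    | succ k => rw [hd]; exact (boundary_ιMulti x).symm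
  intro k
  refine LinearMap.ext fun w => Subtype.ext ?_
  rw [LinearMap.comp_apply, coe_d, coe_d]
  exact LinearMap.congr_fun boundary_comp_boundary (w : ExteriorAlgebra R L)

/-- Let `g` be a Lie algebra over a commutative ring `R`, free as an `R`-module.  The
Chevalley–Eilenberg boundary `∂ₖ : Λᵏ g → Λᵏ⁻¹ g`, characterized on wedges of generators by
`∂ₖ(x₁∧…∧xₖ) = Σ_{r<s} (−1)^{r+s} [x_r,x_s] ∧ x₁ ∧ … ∧ x̂_r ∧ … ∧ x̂_s ∧ … ∧ xₖ`,
satisfies `∂ₖ₋₁ ∘ ∂ₖ = 0`. -/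
theorem stmt_7 (R : Type*) [CommRing R] (L : Type*) [LieRing L] [LieAlgebra R L]
    [Module.Free R L]
    (d : ∀ k : ℕ, (⋀[R]^(k + 1) L) →ₗ[R] ⋀[R]^k L)
    (hd : ∀ (k : ℕ) (x : Fin (k + 2) → L),
      d (k + 1) (wedge (k + 2) x) =
        ∑ r : Fin (k + 2), ∑ s : Fin (k + 2),
          if h : r < s then
            ((-1 : ℤ) ^ ((r : ℕ) + (s : ℕ))) •
              wedge (k + 1)
                (Fin.cons ⁅x r, x s⁆
                  (x ∘ fun i : Fin k =>
                    s.succAbove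
                      ((⟨(r : ℕ), by
                        have h1 : (r : ℕ) < (s : ℕ) := h
                        have h2 := s.isLt
                        omega⟩ : Fin (k + 1)).succAbove i)))
          else 0)
    (hd0 : ∀ x : Fin 1 → L, d 0 (wedge 1 x) = 0) :
    ∀ k : ℕ, (d k).comp (d (k + 1)) = 0 :=
  stmt_7_general R L d hd hd0
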